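/- arXiv:2306.15293 — 2 statements merged into one kernel-verified Lean document; each statement's English description precedes it below -/
import Mathlib

section
/- Let n ≥ 2 and let K, T ⊆ ℝⁿ be compact sets each with connected boundary. Then vol((∂K + ∂T)/2) ≥ √(vol(K)·vol(T)), where (∂K + ∂T)/2 = {(x+y)/2 : x ∈ ∂K, y ∈ ∂T}. -/
open MeasureTheory Pointwise

/-- The Prékopa–Leindler inequality as a property of a measure. -/
def PrekopaLeindler {E : Type*} [AddCommGroup E] [Module ℝ E] [MeasurableSpace E]
    (μ : Measure E) : Prop :=
  ∀ t : ℝ, 0 < t → t < 1 → ∀ f g h : E → ENNReal, Measurable f → Measurable g → Measurable h →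
    (∀ x y, f x ^ (1 - t) * g y ^ t ≤ h ((1 - t) • x + t • y)) →
    (∫⁻ x, f x ∂μ) ^ (1 - t) * (∫⁻ x, g x ∂μ) ^ t ≤ ∫⁻ x, h x ∂μ

lemma ENNReal.rpow_mul_rpow_le_weighted_add {t : ℝ} (h0 : 0 < t) (h1 : t < 1) (a b : ENNReal) :
    a ^ (1 - t) * b ^ t ≤ ENNReal.ofReal (1 - t) * a + ENNReal.ofReal t * b := by
  rcases eq_or_ne a ⊤ with rfl | ha
  · rw [ENNReal.mul_top (by simpa using h1), top_add]; exact le_top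
  rcases eq_or_ne b ⊤ with rfl | hb
  · rw [ENNReal.mul_top (by simpa using h0), add_top]; exact le_top
  rw [← ENNReal.ofReal_toReal ha, ← ENNReal.ofReal_toReal hb,
    ENNReal.ofReal_rpow_of_nonneg (by positivity) (by linarith),
    ENNReal.ofReal_rpow_of_nonneg (by positivity) h0.le,
    ← ENNReal.ofReal_mul (by positivity), ← ENNReal.ofReal_mul (by linarith),
    ← ENNReal.ofReal_mul h0.le, ← ENNReal.ofReal_add
      (mul_nonneg (by linarith) (by positivity)) (by positivity)]
  exact ENNReal.ofReal_le_ofReal (Real.geom_mean_le_arith_mean2_weighted (by linarith) h0.le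
    (by positivity) (by positivity) (by ring))

lemma IsCompact.volume_add_volume_le_real {A B C : Set ℝ} (hA : IsCompact A) (hB : IsCompact B)
    (hA' : A.Nonempty) (hB' : B.Nonempty) (hC : A + B ⊆ C) :
    volume A + volume B ≤ volume C := by
  have hsub : (sInf B +ᵥ A) ∪ (sSup A +ᵥ B) ⊆ C := by
    rintro _ (⟨a, ha, rfl⟩ | ⟨b, hb, rfl⟩)
    · exact hC ⟨a, ha, sInf B, hB.sInf_mem hB', add_comm _ _⟩
    · exact hC ⟨sSup A, hA.sSup_mem hA', b, hb, rfl⟩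
  have hdisj : AEDisjoint volume (sInf B +ᵥ A) (sSup A +ᵥ B) := by
    refine measure_mono_null (t := {sInf B + sSup A}) ?_ (by simp)
    rintro _ ⟨⟨a, ha, rfl⟩, ⟨b, hb, hab⟩⟩
    have h1 := le_csSup hA.bddAbove ha
    have h2 := csInf_le hB.bddBelow hb
    simp only [vadd_eq_add, Set.mem_singleton_iff] at *
    linarith
  calc volume A + volume B = volume (sInf B +ᵥ A) + volume (sSup A +ᵥ B) := by
        simp [measure_vadd]
    _ = volume ((sInf B +ᵥ A) ∪ (sSup A +ᵥ B)) :=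
        (measure_union₀ (hB.vadd _).measurableSet.nullMeasurableSet hdisj).symm
    _ ≤ volume C := measure_mono hsub

lemma MeasurableSet.volume_add_volume_le_real {A B C : Set ℝ} (hA : MeasurableSet A)
    (hB : MeasurableSet B) (hA' : A.Nonempty) (hB' : B.Nonempty) (hC : A + B ⊆ C) :
    volume A + volume B ≤ volume C := by
  obtain ⟨a, ha⟩ := hA'
  obtain ⟨b, hb⟩ := hB'
  have key : ∀ K ⊆ A, IsCompact K → ∀ L ⊆ B, IsCompact L → volume K + volume L ≤ volume C := by
    intro K hKA hK L hLB hL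
    refine (add_le_add (measure_mono (Set.subset_insert a K))
      (measure_mono (Set.subset_insert b L))).trans ?_
    exact (hK.insert a).volume_add_volume_le_real (hL.insert b) ⟨a, by simp⟩ ⟨b, by simp⟩
      ((Set.add_subset_add (Set.insert_subset ha hKA) (Set.insert_subset hb hLB)).trans hC)
  rw [hA.measure_eq_iSup_isCompact, hB.measure_eq_iSup_isCompact]
  simp only [iSup_and']
  exact ENNReal.biSup_add_biSup_le' ⟨∅, by simp⟩ ⟨∅, by simp⟩
    fun K hK L hL ↦ key K hK.1 hK.2 L hL.1 hL.2

lemma lintegral_eq_lintegral_meas_lt_toReal {α : Type*} [MeasurableSpace α] (μ : Measure α)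
    {f : α → ENNReal} (hf : Measurable f) (hf' : ∀ x, f x ≠ ⊤) :
    ∫⁻ x, f x ∂μ = ∫⁻ u in Set.Ioi 0, μ {x | u < (f x).toReal} := by
  rw [← lintegral_eq_lintegral_meas_lt μ (Filter.Eventually.of_forall fun x ↦ by simp)
    hf.ennreal_toReal.aemeasurable]
  exact lintegral_congr fun x ↦ (ENNReal.ofReal_toReal (hf' x)).symm

lemma weighted_lintegral_add_le_of_iSup_eq_one {t : ℝ} (h0 : 0 < t) (h1 : t < 1)
    {f g h : ℝ → ENNReal} (hf : Measurable f) (hg : Measurable g) (hh : Measurable h)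
    (hf1 : ⨆ x, f x = 1) (hg1 : ⨆ x, g x = 1)
    (H : ∀ x y, f x ^ (1 - t) * g y ^ t ≤ h ((1 - t) • x + t • y)) :
    ENNReal.ofReal (1 - t) * (∫⁻ x, f x) + ENNReal.ofReal t * (∫⁻ x, g x) ≤ ∫⁻ x, h x := by
  have hfle : ∀ x, f x ≤ 1 := fun x ↦ hf1 ▸ le_iSup f x
  have hgle : ∀ x, g x ≤ 1 := fun x ↦ hg1 ▸ le_iSup g x
  have hft : ∀ x, f x ≠ ⊤ := fun x ↦ ((hfle x).trans_lt ENNReal.one_lt_top).ne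
  have hgt : ∀ x, g x ≠ ⊤ := fun x ↦ ((hgle x).trans_lt ENNReal.one_lt_top).ne
  have hm : Measurable fun x ↦ min (h x) 1 := hh.min measurable_const
  have hmt : ∀ x, min (h x) 1 ≠ ⊤ := fun x ↦ ((min_le_right _ _).trans_lt ENNReal.one_lt_top).ne
  refine le_trans ?_ (lintegral_mono fun x ↦ min_le_left (h x) 1)
  rw [lintegral_eq_lintegral_meas_lt_toReal _ hf hft,
    lintegral_eq_lintegral_meas_lt_toReal _ hg hgt,
    lintegral_eq_lintegral_meas_lt_toReal _ hm hmt,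
    ← lintegral_const_mul' _ _ ENNReal.ofReal_ne_top,
    ← lintegral_const_mul' _ _ ENNReal.ofReal_ne_top]
  refine (le_lintegral_add _ _).trans (setLIntegral_mono' measurableSet_Ioi fun u hu ↦ ?_)
  have hu : 0 < u := hu
  have lt_iff : ∀ a : ENNReal, a ≠ ⊤ → (u < a.toReal ↔ ENNReal.ofReal u < a) := fun a ha ↦
    (ENNReal.ofReal_lt_iff_lt_toReal hu.le ha).symm
  simp only [lt_iff _ (hft _), lt_iff _ (hgt _), lt_iff _ (hmt _)]
  rcases le_or_gt 1 u with hu1 | hu1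
  · have hu2 : (1 : ENNReal) ≤ ENNReal.ofReal u := by simpa using hu1
    have hfe : {x | ENNReal.ofReal u < f x} = ∅ :=
      Set.eq_empty_of_forall_notMem fun x hx ↦ (((hfle x).trans hu2).not_gt hx)
    have hge : {x | ENNReal.ofReal u < g x} = ∅ :=
      Set.eq_empty_of_forall_notMem fun x hx ↦ (((hgle x).trans hu2).not_gt hx)
    simp [hfe, hge]
  · have hu2 : ENNReal.ofReal u < 1 := by simpa using hu1
    obtain ⟨x₀, hx₀⟩ := lt_iSup_iff.1 (hf1 ▸ hu2)
    obtain ⟨y₀, hy₀⟩ := lt_iSup_iff.1 (hg1 ▸ hu2)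
    have hsf := Measure.addHaar_smul volume (1 - t) {x | ENNReal.ofReal u < f x}
    have hsg := Measure.addHaar_smul volume t {x | ENNReal.ofReal u < g x}
    simp only [Module.finrank_self, pow_one, abs_of_pos h0, abs_of_pos (sub_pos.2 h1)] at hsf hsg
    rw [← hsf, ← hsg]
    refine MeasurableSet.volume_add_volume_le_real
      ((measurableSet_lt measurable_const hf).const_smul₀ _)
      ((measurableSet_lt measurable_const hg).const_smul₀ _)
      (Set.Nonempty.smul_set ⟨x₀, hx₀⟩) (Set.Nonempty.smul_set ⟨y₀, hy₀⟩) ?_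
    rintro _ ⟨_, ⟨x, hx, rfl⟩, _, ⟨y, hy, rfl⟩, rfl⟩
    refine lt_min ?_ hu2
    refine lt_of_lt_of_le ?_ (H x y)
    have hu3 : ENNReal.ofReal u ≠ 0 := by simpa using hu
    calc ENNReal.ofReal u = ENNReal.ofReal u ^ (1 - t) * ENNReal.ofReal u ^ t := by
          rw [← ENNReal.rpow_add _ _ hu3 ENNReal.ofReal_ne_top]; simp
      _ < _ := ENNReal.mul_lt_mul (ENNReal.rpow_lt_rpow hx (by linarith))
            (ENNReal.rpow_lt_rpow hy h0)

lemma prekopaLeindler_real_of_iSup_ne_top {t : ℝ} (h0 : 0 < t) (h1 : t < 1)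
    {f g h : ℝ → ENNReal} (hf : Measurable f) (hg : Measurable g) (hh : Measurable h)
    (hf1 : ⨆ x, f x ≠ ⊤) (hg1 : ⨆ x, g x ≠ ⊤)
    (H : ∀ x y, f x ^ (1 - t) * g y ^ t ≤ h ((1 - t) • x + t • y)) :
    (∫⁻ x, f x) ^ (1 - t) * (∫⁻ x, g x) ^ t ≤ ∫⁻ x, h x := by
  have ht : 0 < 1 - t := sub_pos.2 h1
  rcases eq_or_ne (⨆ x, f x) 0 with hM | hM
  · have : ∀ x, f x = 0 := by simpa using hM
    simp [this, ht]
  rcases eq_or_ne (⨆ x, g x) 0 with hN | hN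
  · have : ∀ x, g x = 0 := by simpa using hN
    simp [this, h0]
  set M := ⨆ x, f x
  set N := ⨆ x, g x
  have key := weighted_lintegral_add_le_of_iSup_eq_one h0 h1 (hf.const_mul M⁻¹) (hg.const_mul N⁻¹)
    (hh.const_mul ((M⁻¹) ^ (1 - t) * (N⁻¹) ^ t))
    (by rw [← ENNReal.mul_iSup, ENNReal.inv_mul_cancel hM hf1])
    (by rw [← ENNReal.mul_iSup, ENNReal.inv_mul_cancel hN hg1])
    (fun x y ↦ by
      rw [ENNReal.mul_rpow_of_nonneg _ _ ht.le, ENNReal.mul_rpow_of_nonneg _ _ h0.le,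
        mul_mul_mul_comm]
      gcongr
      exact H x y)
  replace key := (ENNReal.rpow_mul_rpow_le_weighted_add h0 h1 _ _).trans key
  rw [lintegral_const_mul _ hf, lintegral_const_mul _ hg, lintegral_const_mul _ hh,
    ENNReal.mul_rpow_of_nonneg _ _ ht.le, ENNReal.mul_rpow_of_nonneg _ _ h0.le,
    mul_mul_mul_comm] at key
  have hM0 : M⁻¹ ≠ 0 := ENNReal.inv_ne_zero.2 hf1
  have hN0 : N⁻¹ ≠ 0 := ENNReal.inv_ne_zero.2 hg1
  have hMt : M⁻¹ ≠ ⊤ := ENNReal.inv_ne_top.2 hM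
  have hNt : N⁻¹ ≠ ⊤ := ENNReal.inv_ne_top.2 hN
  refine (ENNReal.mul_le_mul_iff_right ?_ ?_).1 key
  · exact mul_ne_zero (ENNReal.rpow_pos (pos_iff_ne_zero.2 hM0) hMt).ne'
      (ENNReal.rpow_pos (pos_iff_ne_zero.2 hN0) hNt).ne'
  · exact ENNReal.mul_ne_top (ENNReal.rpow_ne_top_of_nonneg ht.le hMt)
      (ENNReal.rpow_ne_top_of_nonneg h0.le hNt)

lemma tendsto_lintegral_min_natCast {α : Type*} [MeasurableSpace α] (μ : Measure α)
    {f : α → ENNReal} (hf : Measurable f) :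
    Filter.Tendsto (fun k : ℕ ↦ ∫⁻ x, min (f x) k ∂μ) Filter.atTop (nhds (∫⁻ x, f x ∂μ)) := by
  refine lintegral_tendsto_of_tendsto_of_monotone
    (fun k ↦ (hf.min measurable_const).aemeasurable)
    (Filter.Eventually.of_forall fun x k l hkl ↦ min_le_min_left _ (by exact_mod_cast hkl))
    (Filter.Eventually.of_forall fun x ↦ ?_)
  simpa using (tendsto_const_nhds (x := f x)).min ENNReal.tendsto_nat_nhds_top

lemma prekopaLeindler_real : PrekopaLeindler (volume : Measure ℝ) := by
  intro t h0 h1 f g h hf hg hh H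
  have ht : 0 < 1 - t := sub_pos.2 h1
  rcases eq_or_ne (∫⁻ x, f x) 0 with hf0 | hf0
  · simp [hf0, ht]
  rcases eq_or_ne (∫⁻ x, g x) 0 with hg0 | hg0
  · simp [hg0, h0]
  have hlim := ENNReal.Tendsto.mul
    ((ENNReal.continuous_rpow_const (y := 1 - t)).continuousAt.tendsto.comp
      (tendsto_lintegral_min_natCast volume hf)) (Or.inl (by simp [hf0, ht, ht.not_gt]))
    ((ENNReal.continuous_rpow_const (y := t)).continuousAt.tendsto.comp
      (tendsto_lintegral_min_natCast volume hg)) (Or.inl (by simp [hg0, h0, h0.not_gt]))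
  refine le_of_tendsto' hlim fun k ↦ ?_
  refine prekopaLeindler_real_of_iSup_ne_top h0 h1 (hf.min measurable_const)
    (hg.min measurable_const) hh ?_ ?_ fun x y ↦ le_trans ?_ (H x y)
  · exact ((iSup_le fun x ↦ min_le_right _ _).trans_lt (ENNReal.natCast_lt_top k)).ne
  · exact ((iSup_le fun x ↦ min_le_right _ _).trans_lt (ENNReal.natCast_lt_top k)).ne
  · gcongr <;> exact min_le_left _ _

lemma PrekopaLeindler.prod {E F : Type*} [AddCommGroup E] [Module ℝ E] [MeasurableSpace E]
    [AddCommGroup F] [Module ℝ F] [MeasurableSpace F] {μ : Measure E} {ν : Measure F} [SFinite ν]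
    (hμ : PrekopaLeindler μ) (hν : PrekopaLeindler ν) : PrekopaLeindler (μ.prod ν) := by
  intro t h0 h1 f g h hf hg hh H
  rw [lintegral_prod _ hf.aemeasurable, lintegral_prod _ hg.aemeasurable,
    lintegral_prod _ hh.aemeasurable]
  refine hμ t h0 h1 _ _ _ hf.lintegral_prod_right' hg.lintegral_prod_right'
    hh.lintegral_prod_right' fun x y ↦ ?_
  exact hν t h0 h1 _ _ _ (hf.comp measurable_prodMk_left) (hg.comp measurable_prodMk_left)
    (hh.comp measurable_prodMk_left) fun x' y' ↦ H (x, x') (y, y')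

lemma PrekopaLeindler.of_measurePreserving {E F : Type*} [AddCommGroup E] [Module ℝ E]
    [MeasurableSpace E] [AddCommGroup F] [Module ℝ F] [MeasurableSpace F] {μ : Measure E}
    {ν : Measure F} (hμ : PrekopaLeindler μ) {φ : E → F} (hφ : MeasurePreserving φ μ ν)
    (hlin : ∀ (a b : ℝ) (x y : E), φ (a • x + b • y) = a • φ x + b • φ y) :
    PrekopaLeindler ν := by
  intro t h0 h1 f g h hf hg hh H
  rw [← hφ.lintegral_comp hf, ← hφ.lintegral_comp hg, ← hφ.lintegral_comp hh]
  refine hμ t h0 h1 _ _ _ (hf.comp hφ.measurable) (hg.comp hφ.measurable)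
    (hh.comp hφ.measurable) fun x y ↦ ?_
  rw [hlin]
  exact H _ _

lemma prekopaLeindler_pi (n : ℕ) : PrekopaLeindler (volume : Measure (Fin n → ℝ)) := by
  induction n with
  | zero =>
    intro t h0 h1 f g h hf hg hh H
    have hv : (volume : Measure (Fin 0 → ℝ)) Set.univ = 1 := by
      simp [volume_pi]
    simp only [lintegral_unique, hv, mul_one]
    convert H default default
  | succ n ih =>
    refine (prekopaLeindler_real.prod ih).of_measurePreserving
      (volume_preserving_piFinSuccAbove (fun _ : Fin (n + 1) ↦ ℝ) 0).symm ?_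
    rintro a b x y
    ext i
    refine Fin.cases ?_ (fun j ↦ ?_) i <;> simp [MeasurableEquiv.piFinSuccAbove]

lemma prekopaLeindler_euclideanSpace (n : ℕ) :
    PrekopaLeindler (volume : Measure (EuclideanSpace ℝ (Fin n))) :=
  (prekopaLeindler_pi n).of_measurePreserving (PiLp.volume_preserving_toLp _)
    fun _ _ _ _ ↦ rfl

/-- The Brunn–Minkowski inequality, for sets of volumes `a ^ n` and `b ^ n`. -/
lemma brunnMinkowski {n : ℕ} {A B C : Set (EuclideanSpace ℝ (Fin n))}
    (hA : MeasurableSet A) (hB : MeasurableSet B) (hC : MeasurableSet C) (hA' : A.Nonempty)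
    (hB' : B.Nonempty) (hABC : A + B ⊆ C) {a b : ℝ} (ha : 0 ≤ a) (hb : 0 ≤ b)
    (hAv : volume A = ENNReal.ofReal (a ^ n)) (hBv : volume B = ENNReal.ofReal (b ^ n)) :
    ENNReal.ofReal ((a + b) ^ n) ≤ volume C := by
  rcases ha.eq_or_lt with rfl | ha
  · obtain ⟨x, hx⟩ := hA'
    rw [zero_add, ← hBv, ← measure_vadd volume x B]
    refine measure_mono ?_
    rintro _ ⟨y, hy, rfl⟩
    exact hABC ⟨x, hx, y, hy, rfl⟩
  rcases hb.eq_or_lt with rfl | hb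
  · obtain ⟨x, hx⟩ := hB'
    rw [add_zero, ← hAv, ← measure_vadd volume x A]
    refine measure_mono ?_
    rintro _ ⟨y, hy, rfl⟩
    exact hABC ⟨y, hy, x, hx, add_comm _ _⟩
  have hab : 0 < a + b := add_pos ha hb
  have hunit : ∀ (c : ℝ) (S : Set (EuclideanSpace ℝ (Fin n))), 0 < c →
      volume S = ENNReal.ofReal (c ^ n) → volume (c⁻¹ • S) = 1 := by
    intro c S hc hS
    rw [Measure.addHaar_smul, hS, ← ENNReal.ofReal_mul (abs_nonneg _)]
    simp [abs_of_pos hc, hc.ne']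
  have hone : ∀ (s : ℝ), 0 < s → ∀ (S : Set (EuclideanSpace ℝ (Fin n))) x,
      (S.indicator 1 x : ENNReal) ^ s = S.indicator 1 x := by
    intro s hs S x
    by_cases hx : x ∈ S <;> simp [hx, hs]
  have ht1 : b / (a + b) < 1 := (div_lt_one hab).2 (by linarith)
  have hmA := hA.const_smul₀ a⁻¹
  have hmB := hB.const_smul₀ b⁻¹
  have hmC := hC.const_smul₀ (a + b)⁻¹
  have key := prekopaLeindler_euclideanSpace n (b / (a + b)) (by positivity) ht1
    ((a⁻¹ • A).indicator 1) ((b⁻¹ • B).indicator 1) (((a + b)⁻¹ • C).indicator 1)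
    (measurable_one.indicator hmA) (measurable_one.indicator hmB) (measurable_one.indicator hmC)
    (fun x y ↦ by
      rw [hone _ (by linarith), hone _ (by positivity)]
      by_cases hx : x ∈ a⁻¹ • A
      · by_cases hy : y ∈ b⁻¹ • B
        · have hz : (1 - b / (a + b)) • x + (b / (a + b)) • y ∈ (a + b)⁻¹ • C := by
            obtain ⟨x, hx, rfl⟩ := hx
            obtain ⟨y, hy, rfl⟩ := hy
            refine ⟨x + y, hABC ⟨x, hx, y, hy, rfl⟩, ?_⟩
            simp only [smul_smul, smul_add]
            congr 2 <;> field_simp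
            ring
          simp [hx, hy, hz]
        · simp [hy]
      · simp [hx])
  rw [lintegral_indicator_one hmA, lintegral_indicator_one hmB, lintegral_indicator_one hmC,
    hunit a A ha hAv, hunit b B hb hBv, ENNReal.one_rpow, ENNReal.one_rpow, one_mul] at key
  have hCv : volume C = ENNReal.ofReal ((a + b) ^ n) * volume ((a + b)⁻¹ • C) := by
    conv_lhs => rw [← smul_inv_smul₀ hab.ne' C, Measure.addHaar_smul]
    rw [finrank_euclideanSpace_fin, abs_of_pos (pow_pos hab n)]
  rw [hCv]
  exact le_mul_of_one_le_right' key

lemma volume_setOf_sub_mem_le {n : ℕ} {K T : Set (EuclideanSpace ℝ (Fin n))} (hK : IsCompact K)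
    (hT : IsCompact T) (hT' : T.Nonempty) {a b : ℝ} (ha : 0 ≤ a) (hb : 0 ≤ b) (hn : n ≠ 0)
    (hKv : volume K = ENNReal.ofReal (a ^ n)) (hTv : volume T = ENNReal.ofReal (b ^ n)) :
    volume {z | ∀ y ∈ T, z - y ∈ K} ≤ ENNReal.ofReal (max (a - b) 0 ^ n) := by
  set D := {z | ∀ y ∈ T, z - y ∈ K} with hD
  rcases D.eq_empty_or_nonempty with h | h
  · simp [h]
  have hDm : MeasurableSet D := by
    refine IsClosed.measurableSet ?_
    simp only [hD, Set.ofPred_forall]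
    exact isClosed_biInter fun y _ ↦ hK.isClosed.preimage (by fun_prop)
  have hsub : D + -T ⊆ K := by
    rintro _ ⟨z, hz, y, hy, rfl⟩
    simpa using hz (-y) hy
  have hDfin : volume D ≠ ⊤ := by
    obtain ⟨y, hy⟩ := hT'
    refine ((measure_mono fun z hz ↦ ?_ : volume D ≤ volume (y +ᵥ K)).trans_lt ?_).ne
    · exact ⟨z - y, hz y hy, by simp⟩
    · rw [measure_vadd]; exact hK.measure_lt_top
  set d := (volume D).toReal ^ ((n : ℝ)⁻¹)
  have hd : 0 ≤ d := by positivity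
  have hDv : volume D = ENNReal.ofReal (d ^ n) := by
    rw [Real.rpow_inv_natCast_pow ENNReal.toReal_nonneg hn, ENNReal.ofReal_toReal hDfin]
  have key := brunnMinkowski hDm hT.measurableSet.neg hK.measurableSet h hT'.neg hsub hd hb hDv
    (by rw [Measure.measure_neg, hTv])
  rw [hKv, ENNReal.ofReal_le_ofReal_iff (by positivity),
    pow_le_pow_iff_left₀ (by positivity) ha hn] at key
  rw [hDv]
  refine ENNReal.ofReal_le_ofReal (pow_le_pow_left₀ hd (le_max_of_le_left ?_) n)
  linarith

lemma subset_or_subset_of_disjoint_frontier {X : Type*} [TopologicalSpace X] [T2Space X]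
    [PreconnectedSpace X] [NoncompactSpace X] {K L : Set X} (hK : IsCompact K) (hL : IsCompact L)
    (hbK : IsPreconnected (frontier K)) (hbL : IsPreconnected (frontier L))
    (hd : Disjoint (frontier K) (frontier L)) (hne : (K ∩ L).Nonempty) : K ⊆ L ∨ L ⊆ K := by
  have side : ∀ {A B : Set X}, IsCompact A → IsPreconnected (frontier B) →
      Disjoint (frontier A) (frontier B) → frontier B ⊆ interior A ∨ frontier B ⊆ Aᶜ := by
    intro A B hA hB hAB
    refine IsPreconnected.subset_or_subset isOpen_interior hA.isClosed.isOpen_compl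
      (disjoint_compl_right.mono_left interior_subset) (fun x hx ↦ ?_) hB
    by_contra hx'
    simp only [Set.mem_union, Set.mem_compl_iff, not_or, not_not] at hx'
    exact hAB.notMem_of_mem_right hx ⟨subset_closure hx'.2, hx'.1⟩
  have clopen : ∀ {A B : Set X}, IsCompact B → A ⊆ B → frontier A ⊆ ∅ → A = ∅ := by
    intro A B hB hAB hA
    refine (isClopen_iff.1 (isClopen_iff_frontier_eq_empty.2
      (Set.subset_empty_iff.1 hA))).resolve_right fun h ↦ hB.ne_univ ?_
    exact Set.univ_subset_iff.1 (h ▸ hAB)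
  have nested : ∀ {A B : Set X}, IsCompact A → IsCompact B → frontier B ⊆ interior A →
      frontier A ⊆ Bᶜ → B ⊆ A := by
    intro A B hA hB h1 h2
    rw [← Set.sdiff_eq_empty, Set.sdiff_eq]
    refine clopen hB Set.inter_subset_left ((frontier_inter_subset _ _).trans ?_)
    rw [closure_compl, frontier_compl, hB.isClosed.closure_eq]
    rintro x (⟨hx, hx'⟩ | ⟨hx, hx'⟩)
    · exact hx' (h1 hx)
    · exact h2 hx' hx
  rcases side hK hbL hd with h1 | h1 <;> rcases side hL hbK hd.symm with h2 | h2
  · refine absurd (clopen (hK.union hL) subset_rfl ((frontier_union_subset _ _).trans ?_))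
      (hne.mono (Set.inter_subset_left.trans Set.subset_union_left)).ne_empty
    rw [closure_compl, closure_compl]
    rintro x (⟨hx, hx'⟩ | ⟨hx, hx'⟩)
    · exact hx' (h2 hx)
    · exact hx (h1 hx')
  · exact Or.inr (nested hK hL h1 h2)
  · exact Or.inl (nested hL hK h2 h1)
  · refine absurd (clopen hK Set.inter_subset_left ((frontier_inter_subset _ _).trans ?_))
      hne.ne_empty
    rw [hK.isClosed.closure_eq, hL.isClosed.closure_eq]
    rintro x (⟨hx, hx'⟩ | ⟨hx, hx'⟩)
    · exact h2 hx hx'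
    · exact h1 hx' hx

lemma add_subset_frontier_add_frontier_union {E : Type*} [AddCommGroup E] [TopologicalSpace E]
    [IsTopologicalAddGroup E] [T2Space E] [PreconnectedSpace E] [NoncompactSpace E] {K T : Set E}
    (hK : IsCompact K) (hT : IsCompact T) (hbK : IsPreconnected (frontier K))
    (hbT : IsPreconnected (frontier T)) :
    K + T ⊆ (frontier K + frontier T) ∪
      ({z | ∀ y ∈ T, z - y ∈ K} ∪ {z | ∀ x ∈ K, z - x ∈ T}) := by
  rintro _ ⟨x, hx, y, hy, rfl⟩
  by_contra hz
  simp only [Set.mem_union, not_or] at hz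
  obtain ⟨hz1, hz2, hz3⟩ := hz
  set φ := Homeomorph.subLeft (x + y)
  have hφ : ∀ w, φ w = x + y - w := fun w ↦ rfl
  have hd : Disjoint (frontier K) (frontier (φ '' T)) := by
    rw [Set.disjoint_left, ← φ.image_frontier]
    rintro _ hw ⟨v, hv, rfl⟩
    exact hz1 ⟨_, hw, v, hv, by simp [hφ]⟩
  rcases subset_or_subset_of_disjoint_frontier hK (hT.image φ.continuous) hbK
    (φ.image_frontier T ▸ hbT.image φ φ.continuous.continuousOn) hd ⟨x, hx, y, hy, by simp [hφ]⟩
    with h | h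
  · refine hz3 fun w hw ↦ ?_
    obtain ⟨v, hv, hvw⟩ := h hw
    rw [← hvw, hφ, sub_sub_cancel]
    exact hv
  · exact hz2 fun w hw ↦ h ⟨w, hw, rfl⟩

lemma pow_add_pow_le_pow_of_sq_add_sq_eq {x y q : ℝ} {n : ℕ} (hn : 2 ≤ n) (hx : 0 ≤ x)
    (hy : 0 ≤ y) (hq : 0 ≤ q) (h : x ^ 2 = y ^ 2 + q ^ 2) : y ^ n + q ^ n ≤ x ^ n := by
  obtain ⟨m, rfl⟩ := Nat.exists_eq_add_of_le' hn
  have hyx : y ≤ x := abs_le_of_sq_le_sq' (by nlinarith) hx |>.2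
  have hqx : q ≤ x := abs_le_of_sq_le_sq' (by nlinarith) hx |>.2
  calc y ^ (m + 2) + q ^ (m + 2) = y ^ m * y ^ 2 + q ^ m * q ^ 2 := by ring
    _ ≤ x ^ m * y ^ 2 + x ^ m * q ^ 2 := by gcongr
    _ = x ^ (m + 2) := by rw [← mul_add, ← h]; ring

theorem boundary_sum_average_lower_bound (n : ℕ) (hn : 2 ≤ n)
    (K T : Set (EuclideanSpace ℝ (Fin n)))
    (hK : IsCompact K) (hT : IsCompact T)
    (hbK : IsConnected (frontier K)) (hbT : IsConnected (frontier T)) :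
    (volume ((2:ℝ)⁻¹ • (frontier K + frontier T))).toReal ≥
      Real.sqrt ((volume K).toReal * (volume T).toReal) := by
  have hn0 : n ≠ 0 := by omega
  have : Nonempty (Fin n) := ⟨⟨0, by omega⟩⟩
  have : NoncompactSpace (EuclideanSpace ℝ (Fin n)) := NormedSpace.noncompactSpace ℝ _
  have hKne : K.Nonempty := hbK.nonempty.mono hK.isClosed.frontier_subset
  have hTne : T.Nonempty := hbT.nonempty.mono hT.isClosed.frontier_subset
  have radius : ∀ S : Set (EuclideanSpace ℝ (Fin n)), IsCompact S →
      ∃ r : ℝ, 0 ≤ r ∧ volume S = ENNReal.ofReal (r ^ n) := fun S hS ↦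
    ⟨(volume S).toReal ^ ((n : ℝ)⁻¹), by positivity, by
      rw [Real.rpow_inv_natCast_pow ENNReal.toReal_nonneg hn0,
        ENNReal.ofReal_toReal hS.measure_lt_top.ne]⟩
  obtain ⟨a, ha, hKv⟩ := radius K hK
  obtain ⟨b, hb, hTv⟩ := radius T hT
  have hScpt : IsCompact (frontier K + frontier T) :=
    (hK.of_isClosed_subset isClosed_frontier hK.isClosed.frontier_subset).add
      (hT.of_isClosed_subset isClosed_frontier hT.isClosed.frontier_subset)
  have hBM := brunnMinkowski hK.measurableSet hT.measurableSet (hK.add hT).measurableSet hKne hTne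
    subset_rfl ha hb hKv hTv
  have hcover := (measure_mono (μ := volume) (add_subset_frontier_add_frontier_union hK hT
    hbK.isPreconnected hbT.isPreconnected)).trans ((measure_union_le _ _).trans
      (add_le_add_right (measure_union_le _ _) _))
  have hD1 := volume_setOf_sub_mem_le hK hT hTne ha hb hn0 hKv hTv
  have hD2 := volume_setOf_sub_mem_le hT hK hKne hb ha hn0 hTv hKv
  have htotal := hBM.trans (hcover.trans (add_le_add_right (add_le_add hD1 hD2) _))
  set s := (volume (frontier K + frontier T)).toReal with hs
  rw [← ENNReal.ofReal_toReal hScpt.measure_lt_top.ne,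
    ← ENNReal.ofReal_add (by positivity) (by positivity),
    ← ENNReal.ofReal_add (by positivity) (by positivity),
    ENNReal.ofReal_le_ofReal_iff (by positivity), ← hs] at htotal
  have hmax : max (a - b) 0 ^ n + max (b - a) 0 ^ n = |a - b| ^ n := by
    rcases le_total a b with h | h
    · rw [max_eq_right (by linarith), max_eq_left (by linarith), abs_of_nonpos (by linarith),
        zero_pow hn0, zero_add, neg_sub]
    · rw [max_eq_left (by linarith), max_eq_right (by linarith), abs_of_nonneg (by linarith),
        zero_pow hn0, add_zero]
  rw [hmax] at htotal
  have hpow := pow_add_pow_le_pow_of_sq_add_sq_eq (x := (a + b) / 2) (y := |a - b| / 2)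
    (q := √(a * b)) hn (by positivity) (by positivity) (by positivity)
    (by rw [Real.sq_sqrt (by positivity), div_pow, div_pow, sq_abs]; ring)
  rw [Measure.addHaar_smul, ENNReal.toReal_mul, ← hs, ENNReal.toReal_ofReal (abs_nonneg _), hKv,
    hTv, ENNReal.toReal_ofReal (by positivity), ENNReal.toReal_ofReal (by positivity), ← mul_pow,
    finrank_euclideanSpace_fin, abs_of_pos (by positivity)]
  have hsqrt : √((a * b) ^ n) = √(a * b) ^ n := by
    rw [Real.sqrt_eq_iff_mul_self_eq (by positivity) (by positivity), ← mul_pow,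
      Real.mul_self_sqrt (by positivity)]
  rw [hsqrt, ge_iff_le]
  calc √(a * b) ^ n ≤ ((a + b) / 2) ^ n - (|a - b| / 2) ^ n := by linarith
    _ = (2:ℝ)⁻¹ ^ n * ((a + b) ^ n - |a - b| ^ n) := by
      rw [div_eq_inv_mul, div_eq_inv_mul, mul_pow, mul_pow]; ring
    _ ≤ (2:ℝ)⁻¹ ^ n * s := by gcongr; linarith
end

section
/- Let n ≥ 2, let m > 2, and let K₁, …, K_m ⊆ ℝⁿ be compact sets each with connected boundary. Then vol((∂K₁ + ⋯ + ∂K_m)/m) ≥ (vol(K₁)·⋯·vol(K_m))^{1/m}. -/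
open MeasureTheory Pointwise

lemma Real.volume_add_le_of_isCompact {A B : Set ℝ} (hA : IsCompact A) (hB : IsCompact B)
    (hA' : A.Nonempty) (hB' : B.Nonempty) : volume A + volume B ≤ volume (A + B) := by
  obtain ⟨a, ha, hamax⟩ := hA.exists_isGreatest hA'
  obtain ⟨b, hb, hbmin⟩ := hB.exists_isLeast hB'
  have h1 : (b +ᵥ A) ∪ (a +ᵥ B) ⊆ A + B := by
    rintro x (⟨y, hy, rfl⟩ | ⟨y, hy, rfl⟩)
    · exact ⟨y, hy, b, hb, add_comm _ _⟩
    · exact ⟨a, ha, y, hy, rfl⟩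
  have h2 : AEDisjoint volume (b +ᵥ A) (a +ᵥ B) := by
    refine measure_mono_null (t := {a + b}) ?_ (by simp)
    rintro x ⟨⟨y, hy, rfl⟩, z, hz, hzy⟩
    have h3 := hamax hy
    have h4 := hbmin hz
    simp only [vadd_eq_add] at hzy ⊢
    simp only [Set.mem_singleton_iff]
    linarith
  calc volume A + volume B = volume ((b +ᵥ A) ∪ (a +ᵥ B)) := by
        rw [measure_union₀ (hB.measurableSet.const_vadd a).nullMeasurableSet h2,
          measure_vadd, measure_vadd]
    _ ≤ _ := measure_mono h1

lemma Real.volume_add_le {A B : Set ℝ} (hA : MeasurableSet A) (hB : MeasurableSet B)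
    (hA' : A.Nonempty) (hB' : B.Nonempty) : volume A + volume B ≤ volume (A + B) := by
  have key : ∀ {A : Set ℝ}, MeasurableSet A → A.Nonempty → ∀ r < volume A,
      ∃ C ⊆ A, IsCompact C ∧ C.Nonempty ∧ r < volume C := by
    rintro A hA ⟨a, ha⟩ r hr
    obtain ⟨C, hCA, hC, hrC⟩ := hA.exists_lt_isCompact hr
    exact ⟨insert a C, Set.insert_subset ha hCA, hC.insert a, ⟨a, by simp⟩,
      hrC.trans_le (measure_mono (Set.subset_insert _ _))⟩
  rcases eq_or_ne (volume A) 0 with h0 | hA0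
  · obtain ⟨a, ha⟩ := hA'
    rw [h0, zero_add, ← measure_vadd volume a B]
    refine measure_mono ?_
    rintro x ⟨y, hy, rfl⟩
    exact ⟨a, ha, y, hy, rfl⟩
  rcases eq_or_ne (volume B) 0 with h0 | hB0
  · obtain ⟨b, hb⟩ := hB'
    rw [h0, add_zero, ← measure_vadd volume b A]
    refine measure_mono ?_
    rintro x ⟨y, hy, rfl⟩
    exact ⟨y, hy, b, hb, add_comm _ _⟩
  refine le_of_forall_lt fun r hr => ?_
  obtain ⟨r₁, h₁, r₂, h₂, hrr⟩ := ENNReal.exists_lt_add_of_lt_add hr hA0 hB0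
  obtain ⟨C, hCA, hC, hC', hC1⟩ := key hA hA' r₁ h₁
  obtain ⟨D, hDB, hD, hD', hD1⟩ := key hB hB' r₂ h₂
  calc r < r₁ + r₂ := hrr
    _ ≤ volume C + volume D := add_le_add hC1.le hD1.le
    _ ≤ volume (C + D) := Real.volume_add_le_of_isCompact hC hD hC' hD'
    _ ≤ _ := measure_mono (Set.add_subset_add hCA hDB)

lemma prekopa_leindler_real_of_sup_eq_one {p q : ℝ} (hp : 0 < p) (hq : 0 < q)
    (hpq : p + q = 1)
    {f g h : ℝ → ℝ} (hf : Measurable f) (hg : Measurable g) (hh : Measurable h)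
    (hf0 : ∀ x, 0 ≤ f x) (hg0 : ∀ x, 0 ≤ g x) (hh0 : ∀ x, 0 ≤ h x)
    (hf1 : ∀ x, f x ≤ 1) (hg1 : ∀ x, g x ≤ 1)
    (hf2 : ∀ t < 1, ∃ x, t < f x) (hg2 : ∀ t < 1, ∃ x, t < g x)
    (H : ∀ x y, f x ^ p * g y ^ q ≤ h (p * x + q * y)) :
    ENNReal.ofReal p * (∫⁻ x, ENNReal.ofReal (f x)) +
      ENNReal.ofReal q * (∫⁻ x, ENNReal.ofReal (g x))
      ≤ ∫⁻ x, ENNReal.ofReal (h x) := by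
  have cake : ∀ {f : ℝ → ℝ}, Measurable f → (∀ x, 0 ≤ f x) → (∀ x, f x ≤ 1) →
      ∫⁻ x, ENNReal.ofReal (f x) = ∫⁻ t in Set.Ioo (0 : ℝ) 1, volume {x | t < f x} := by
    intro f hf hf0 hf1
    rw [lintegral_eq_lintegral_meas_lt volume (Filter.Eventually.of_forall hf0) hf.aemeasurable,
      ← Set.Ioo_union_Ici_eq_Ioi (zero_lt_one' ℝ), lintegral_union measurableSet_Ici
        (Set.disjoint_left.2 fun x hx hx' => (hx.2.trans_le hx').false)]
    have : ∫⁻ t in Set.Ici (1 : ℝ), volume {x | t < f x} = 0 := by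
      rw [setLIntegral_congr_fun (g := fun _ => 0) measurableSet_Ici]
      · simp
      · intro t ht
        have : {x | t < f x} = ∅ := by
          ext x
          simpa using (hf1 x).trans ht
        simp [this]
    rw [this, add_zero]
  have hmeas : ∀ {f : ℝ → ℝ}, Measurable fun t => volume {x | t < f x} := fun {f} =>
    (show Antitone fun t => volume {x | t < f x} from
      fun s t hst => measure_mono fun x hx => lt_of_le_of_lt hst hx).measurable
  rw [cake hf hf0 hf1, cake hg hg0 hg1, lintegral_eq_lintegral_meas_lt volume
    (Filter.Eventually.of_forall hh0) hh.aemeasurable, ← lintegral_const_mul _ hmeas,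
    ← lintegral_const_mul _ hmeas, ← lintegral_add_left (hmeas.const_mul _)]
  refine (setLIntegral_mono hmeas fun t ht => ?_).trans
    (lintegral_mono_set Set.Ioo_subset_Ioi_self)
  have hsc : ∀ {c : ℝ} (s : Set ℝ), 0 < c →
      ENNReal.ofReal c * volume s = volume (c • s) := by
    intro c s hc
    rw [Measure.addHaar_smul]
    simp [abs_of_pos hc]
  rw [hsc _ hp, hsc _ hq]
  refine (Real.volume_add_le ((measurableSet_lt measurable_const hf).const_smul₀ p)
    ((measurableSet_lt measurable_const hg).const_smul₀ q)
    (Set.Nonempty.smul_set (hf2 t ht.2)) (Set.Nonempty.smul_set (hg2 t ht.2))).trans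
    (measure_mono ?_)
  rintro _ ⟨_, ⟨x, hx, rfl⟩, _, ⟨y, hy, rfl⟩, rfl⟩
  simp only [Set.mem_ofPred_eq] at hx hy
  refine lt_of_lt_of_le ?_ (H x y)
  calc t = t ^ p * t ^ q := by rw [← Real.rpow_add ht.1, hpq, Real.rpow_one]
    _ < f x ^ p * g y ^ q := mul_lt_mul'' (Real.rpow_lt_rpow ht.1.le hx hp)
      (Real.rpow_lt_rpow ht.1.le hy hq) (Real.rpow_nonneg ht.1.le _) (Real.rpow_nonneg ht.1.le _)

open scoped ENNReal

lemma ENNReal.rpow_mul_rpow_le_add {p q : ℝ} (hp : 0 < p) (hq : 0 < q) (hpq : p + q = 1)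
    (x y : ℝ≥0∞) : x ^ p * y ^ q ≤ ENNReal.ofReal p * x + ENNReal.ofReal q * y := by
  have hp' : ENNReal.ofReal p ≠ 0 := by simpa using hp
  have hq' : ENNReal.ofReal q ≠ 0 := by simpa using hq
  rcases eq_or_ne x ⊤ with rfl | hx
  · simp [ENNReal.mul_top hp']
  rcases eq_or_ne y ⊤ with rfl | hy
  · simp [ENNReal.mul_top hq']
  lift x to NNReal using hx
  lift y to NNReal using hy
  have := NNReal.geom_mean_le_arith_mean2_weighted p.toNNReal q.toNNReal x y
    (by rw [← Real.toNNReal_add hp.le hq.le, hpq, Real.toNNReal_one])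
  rw [Real.coe_toNNReal _ hp.le, Real.coe_toNNReal _ hq.le] at this
  rw [← ENNReal.coe_rpow_of_nonneg _ hp.le, ← ENNReal.coe_rpow_of_nonneg _ hq.le]
  simp only [ENNReal.ofReal]
  exact_mod_cast this

lemma prekopa_leindler_real_of_le {p q : ℝ} (hp : 0 < p) (hq : 0 < q) (hpq : p + q = 1)
    {f g h : ℝ → ℝ≥0∞} (hf : Measurable f) (hg : Measurable g) (hh : Measurable h)
    {k : ℝ≥0∞} (hk : k ≠ ⊤) (hfk : ∀ x, f x ≤ k) (hgk : ∀ x, g x ≤ k)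
    (H : ∀ x y, f x ^ p * g y ^ q ≤ h (p * x + q * y)) :
    (∫⁻ x, f x) ^ p * (∫⁻ x, g x) ^ q ≤ ∫⁻ x, h x := by
  rcases eq_or_ne (⨆ x, f x) 0 with h0 | hα
  · have : ∀ x, f x = 0 := by simpa using h0
    simp [this, hp]
  rcases eq_or_ne (⨆ x, g x) 0 with h0 | hβ
  · have : ∀ x, g x = 0 := by simpa using h0
    simp [this, hq]
  set α := ⨆ x, f x with hαdef
  set β := ⨆ x, g x with hβdef
  have hα' : α ≠ ⊤ := ne_top_of_le_ne_top hk (iSup_le hfk)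
  have hβ' : β ≠ ⊤ := ne_top_of_le_ne_top hk (iSup_le hgk)
  set c := α ^ p * β ^ q with hc
  have hc0 : c ≠ 0 := mul_ne_zero (by simp [hp, hp.le, hα]) (by simp [hq, hq.le, hβ])
  have hc1 : c ≠ ⊤ := ENNReal.mul_ne_top (ENNReal.rpow_ne_top_of_nonneg hp.le hα')
    (ENNReal.rpow_ne_top_of_nonneg hq.le hβ')
  have hf1 : ∀ x, f x / α ≤ 1 := fun x =>
    ENNReal.div_le_of_le_mul (by rw [one_mul]; exact le_iSup f x)
  have hg1 : ∀ x, g x / β ≤ 1 := fun x =>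
    ENNReal.div_le_of_le_mul (by rw [one_mul]; exact le_iSup g x)
  have sup : ∀ {f : ℝ → ℝ≥0∞}, (⨆ x, f x) ≠ 0 → (⨆ x, f x) ≠ ⊤ → (∀ x, f x / (⨆ x, f x) ≤ 1) →
      ∀ t < (1 : ℝ), ∃ x, t < (f x / (⨆ x, f x)).toReal := by
    intro f h0 h1 hf t ht
    have : ENNReal.ofReal t * (⨆ x, f x) < ⨆ x, f x := by
      conv_rhs => rw [← one_mul (⨆ x, f x)]
      exact ENNReal.mul_lt_mul_left h0 h1 (by simpa using ht)
    obtain ⟨x, hx⟩ := lt_iSup_iff.1 this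
    refine ⟨x, ?_⟩
    have h2 : ENNReal.ofReal t < f x / (⨆ x, f x) :=
      (ENNReal.lt_div_iff_mul_lt (Or.inl h0) (Or.inl h1)).2 hx
    rcases le_or_gt 0 t with h0 | h0
    · exact (ENNReal.ofReal_lt_iff_lt_toReal h0 (ne_top_of_le_ne_top (by simp) (hf x))).1 h2
    · exact h0.trans_le ENNReal.toReal_nonneg
  have key := prekopa_leindler_real_of_sup_eq_one hp hq hpq (f := fun x => (f x / α).toReal)
    (g := fun x => (g x / β).toReal) (h := fun x => (min (h x / c) 1).toReal)
    (hf.div_const _).ennreal_toReal (hg.div_const _).ennreal_toReal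
    ((hh.div_const _).min measurable_const).ennreal_toReal
    (fun _ => ENNReal.toReal_nonneg) (fun _ => ENNReal.toReal_nonneg)
    (fun _ => ENNReal.toReal_nonneg)
    (fun x => ENNReal.toReal_mono (by simp) (hf1 x))
    (fun x => ENNReal.toReal_mono (by simp) (hg1 x))
    (sup hα hα' hf1) (sup hβ hβ' hg1) (by
      intro x y
      rw [ENNReal.toReal_rpow, ENNReal.toReal_rpow, ← ENNReal.toReal_mul]
      refine ENNReal.toReal_mono (ne_top_of_le_ne_top ENNReal.one_ne_top (min_le_right _ _))
        (le_min ?_ ?_)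
      · rw [ENNReal.div_rpow_of_nonneg _ _ hp.le, ENNReal.div_rpow_of_nonneg _ _ hq.le,
          ENNReal.le_div_iff_mul_le (Or.inl hc0) (Or.inl hc1)]
        refine le_trans (le_of_eq ?_) (H x y)
        rw [hc, mul_mul_mul_comm, ENNReal.div_mul_cancel, ENNReal.div_mul_cancel]
        · simp [hq.le, hβ]
        · simp [hq.le, hβ']
        · simp [hp.le, hα]
        · simp [hp.le, hα']
      · exact mul_le_one' (ENNReal.rpow_le_one (hf1 x) hp.le) (ENNReal.rpow_le_one (hg1 y) hq.le))
  have e1 : ∀ x, ENNReal.ofReal (f x / α).toReal = f x * α⁻¹ := fun x =>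
    ENNReal.ofReal_toReal (ne_top_of_le_ne_top (by simp) (hf1 x))
  have e2 : ∀ x, ENNReal.ofReal (g x / β).toReal = g x * β⁻¹ := fun x =>
    ENNReal.ofReal_toReal (ne_top_of_le_ne_top (by simp) (hg1 x))
  have e3 : ∀ x, ENNReal.ofReal (min (h x / c) 1).toReal ≤ h x * c⁻¹ := fun x =>
    (ENNReal.ofReal_toReal_le).trans (min_le_left _ _)
  simp only [e1, e2] at key
  rw [lintegral_mul_const _ hf, lintegral_mul_const _ hg] at key
  have key2 := (ENNReal.rpow_mul_rpow_le_add hp hq hpq _ _).trans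
    (key.trans ((lintegral_mono e3).trans_eq (lintegral_mul_const _ hh)))
  rw [ENNReal.mul_rpow_of_nonneg _ _ hp.le, ENNReal.mul_rpow_of_nonneg _ _ hq.le,
    mul_mul_mul_comm, ENNReal.inv_rpow, ENNReal.inv_rpow, ← ENNReal.mul_inv, ← hc] at key2
  · rwa [ENNReal.mul_le_mul_iff_left (by simpa using hc1) (by simpa using hc0)] at key2
  · simp [hα, hα', hp.not_gt]
  · simp [hα, hα', hp.not_gt]

lemma prekopa_leindler_real {p q : ℝ} (hp : 0 < p) (hq : 0 < q) (hpq : p + q = 1)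
    {f g h : ℝ → ℝ≥0∞} (hf : Measurable f) (hg : Measurable g) (hh : Measurable h)
    (H : ∀ x y, f x ^ p * g y ^ q ≤ h (p * x + q * y)) :
    (∫⁻ x, f x) ^ p * (∫⁻ x, g x) ^ q ≤ ∫⁻ x, h x := by
  rcases eq_or_ne (∫⁻ x, f x) 0 with h0 | hf0
  · simp [h0, hp]
  rcases eq_or_ne (∫⁻ x, g x) 0 with h0 | hg0
  · simp [h0, hq]
  have lim : ∀ {f : ℝ → ℝ≥0∞}, Measurable f →
      Filter.Tendsto (fun k : ℕ => ∫⁻ x, min (f x) k) Filter.atTop (nhds (∫⁻ x, f x)) := by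
    intro f hf
    refine lintegral_tendsto_of_tendsto_of_monotone
      (fun k => (hf.min measurable_const).aemeasurable) ?_ ?_
    · exact Filter.Eventually.of_forall fun x i j hij =>
        min_le_min_left _ (by exact_mod_cast hij)
    · refine Filter.Eventually.of_forall fun x => ?_
      have := (tendsto_const_nhds (x := f x)).min ENNReal.tendsto_nat_nhds_top
      simpa using this
  have lim2 := ENNReal.Tendsto.mul (((ENNReal.continuous_rpow_const (y := p)).tendsto _).comp (lim hf))
    (Or.inl (by simp [hp.le, hp, hf0])) (((ENNReal.continuous_rpow_const (y := q)).tendsto _).comp (lim hg))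
    (Or.inl (by simp [hq.le, hq, hg0]))
  refine le_of_tendsto' lim2 fun k => ?_
  refine prekopa_leindler_real_of_le hp hq hpq (hf.min measurable_const) (hg.min measurable_const) hh
    (ENNReal.natCast_ne_top k) (fun _ => min_le_right _ _) (fun _ => min_le_right _ _)
    fun x y => le_trans ?_ (H x y)
  gcongr <;> exact min_le_left _ _

lemma prekopa_leindler_pi {p q : ℝ} (hp : 0 < p) (hq : 0 < q) (hpq : p + q = 1) (n : ℕ) :
    ∀ {f g h : (Fin n → ℝ) → ℝ≥0∞}, Measurable f → Measurable g → Measurable h →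
    (∀ x y, f x ^ p * g y ^ q ≤ h (p • x + q • y)) →
    (∫⁻ x, f x) ^ p * (∫⁻ x, g x) ^ q ≤ ∫⁻ x, h x := by
  induction n with
  | zero =>
    intro f g h hf hg hh H
    simp only [lintegral_unique]
    have : volume (Set.univ : Set (Fin 0 → ℝ)) = 1 := by
      rw [volume_pi, Measure.pi_univ, Finset.univ_eq_empty, Finset.prod_empty]
    simp only [this, mul_one]
    exact (H (@default _ Unique.instInhabited) (@default _ Unique.instInhabited)).trans_eq
      (congrArg h (Subsingleton.elim _ _))
  | succ n ih =>
    intro f g h hf hg hh H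
    have e := (volume_preserving_piFinSuccAbove (fun _ : Fin (n + 1) => ℝ) 0).symm
    set E := (MeasurableEquiv.piFinSuccAbove (fun _ : Fin (n + 1) => ℝ) 0).symm with hE
    have fub : ∀ {f : (Fin (n + 1) → ℝ) → ℝ≥0∞}, Measurable f →
        ∫⁻ x, f x = ∫⁻ s : ℝ, ∫⁻ x : Fin n → ℝ, f (E (s, x)) := by
      intro f hf
      rw [← e.lintegral_comp hf, Measure.volume_eq_prod,
        lintegral_prod (fun z => f (E z)) (hf.comp E.measurable).aemeasurable]
    rw [fub hf, fub hg, fub hh]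
    refine prekopa_leindler_real hp hq hpq
      (hf.comp E.measurable).lintegral_prod_right' (hg.comp E.measurable).lintegral_prod_right'
      (hh.comp E.measurable).lintegral_prod_right' fun s t => ?_
    have hs : ∀ s : ℝ, Measurable fun x : Fin n → ℝ => E (s, x) := fun s =>
      E.measurable.comp measurable_prodMk_left
    refine ih (hf.comp (hs s)) (hg.comp (hs t)) (hh.comp (hs _)) fun x y => ?_
    refine (H _ _).trans_eq (congrArg h ?_)
    ext i
    refine Fin.cases ?_ (fun i => ?_) i <;>
    simp [hE, MeasurableEquiv.piFinSuccAbove, Fin.insertNthEquiv]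

lemma prekopa_leindler_indicator {n : ℕ} {p q : ℝ} (hp : 0 < p) (hq : 0 < q) (hpq : p + q = 1)
    {A B : Set (EuclideanSpace ℝ (Fin n))} (hA : IsCompact A) (hB : IsCompact B) :
    volume A ^ p * volume B ^ q ≤ volume (p • A + q • B) := by
  have e := PiLp.volume_preserving_toLp (Fin n)
  have vol : ∀ {A : Set (EuclideanSpace ℝ (Fin n))}, IsCompact A →
      volume A = ∫⁻ x : Fin n → ℝ, A.indicator 1 (WithLp.toLp 2 x) := by
    intro A hA
    rw [e.lintegral_comp (measurable_one.indicator hA.measurableSet),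
      lintegral_indicator_one hA.measurableSet]
  have hC := (hA.smul p).add (hB.smul q)
  rw [vol hA, vol hB, vol hC]
  refine prekopa_leindler_pi hp hq hpq n
    ((measurable_one.indicator hA.measurableSet).comp e.measurable)
    ((measurable_one.indicator hB.measurableSet).comp e.measurable)
    ((measurable_one.indicator hC.measurableSet).comp e.measurable) fun x y => ?_
  by_cases hx : WithLp.toLp 2 x ∈ A
  · by_cases hy : WithLp.toLp 2 y ∈ B
    · have : p • WithLp.toLp 2 x + q • WithLp.toLp 2 y ∈ p • A + q • B :=
        ⟨_, ⟨_, hx, rfl⟩, _, ⟨_, hy, rfl⟩, rfl⟩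
      simp [hx, hy, this]
    · simp [hy, hq]
  · simp [hx, hp]

/-- The radius of a set of the same volume, normalized so that the unit cube has radius one. -/
noncomputable def volumeRadius {n : ℕ} (A : Set (EuclideanSpace ℝ (Fin n))) : ℝ :=
  (volume A).toReal ^ ((1 : ℝ) / n)

section volumeRadius

variable {n : ℕ} {A B : Set (EuclideanSpace ℝ (Fin n))}

lemma volumeRadius_nonneg : 0 ≤ volumeRadius A := Real.rpow_nonneg ENNReal.toReal_nonneg _

lemma volumeRadius_pow (hn : n ≠ 0) : volumeRadius A ^ n = (volume A).toReal := by
  rw [volumeRadius, one_div, Real.rpow_inv_natCast_pow ENNReal.toReal_nonneg hn]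

lemma volumeRadius_mono (hB : IsCompact B) (h : A ⊆ B) : volumeRadius A ≤ volumeRadius B :=
  Real.rpow_le_rpow ENNReal.toReal_nonneg
    (ENNReal.toReal_mono hB.measure_lt_top.ne (measure_mono h)) (by positivity)

lemma volumeRadius_smul (hn : n ≠ 0) {c : ℝ} (hc : 0 ≤ c) :
    volumeRadius (c • A) = c * volumeRadius A := by
  refine (pow_left_inj₀ volumeRadius_nonneg (mul_nonneg hc volumeRadius_nonneg) hn).1 ?_
  rw [mul_pow, volumeRadius_pow hn, volumeRadius_pow hn, Measure.addHaar_smul]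
  rw [finrank_euclideanSpace_fin, ENNReal.toReal_mul, abs_of_nonneg (pow_nonneg hc n),
    ENNReal.toReal_ofReal (pow_nonneg hc n)]

lemma volumeRadius_neg : volumeRadius (-A) = volumeRadius A := by
  simp [volumeRadius]

lemma volumeRadius_vadd (a : EuclideanSpace ℝ (Fin n)) :
    volumeRadius (a +ᵥ A) = volumeRadius A := by
  simp [volumeRadius]

/-- The **Brunn–Minkowski inequality** for compact sets. -/
theorem volumeRadius_add_le (hn : n ≠ 0) (hA : IsCompact A) (hB : IsCompact B)
    (hA' : A.Nonempty) (hB' : B.Nonempty) :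
    volumeRadius A + volumeRadius B ≤ volumeRadius (A + B) := by
  rcases (volumeRadius_nonneg (A := A)).eq_or_lt' with h0 | ha
  · obtain ⟨a, ha⟩ := hA'
    rw [h0, zero_add, ← volumeRadius_vadd a]
    refine volumeRadius_mono (hA.add hB) ?_
    rintro _ ⟨y, hy, rfl⟩
    exact ⟨a, ha, y, hy, rfl⟩
  rcases (volumeRadius_nonneg (A := B)).eq_or_lt' with h0 | hb
  · obtain ⟨b, hb⟩ := hB'
    rw [h0, add_zero, ← volumeRadius_vadd b]
    refine volumeRadius_mono (hA.add hB) ?_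
    rintro _ ⟨y, hy, rfl⟩
    exact ⟨y, hy, b, hb, add_comm _ _⟩
  set a := volumeRadius A
  set b := volumeRadius B
  have hab : 0 < a + b := add_pos ha hb
  have one : ∀ {A : Set (EuclideanSpace ℝ (Fin n))}, IsCompact A → 0 < volumeRadius A →
      volume ((volumeRadius A)⁻¹ • A) = 1 := by
    intro A hA ha
    have h : volumeRadius ((volumeRadius A)⁻¹ • A) = 1 := by
      rw [volumeRadius_smul hn (inv_nonneg.2 ha.le), inv_mul_cancel₀ ha.ne']
    have h2 := volumeRadius_pow (A := (volumeRadius A)⁻¹ • A) hn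
    rw [h, one_pow] at h2
    rw [← ENNReal.ofReal_toReal (hA.smul _).measure_lt_top.ne, ← h2, ENNReal.ofReal_one]
  have h := prekopa_leindler_indicator (div_pos ha hab) (div_pos hb hab)
    (by field_simp) (hA.smul a⁻¹) (hB.smul b⁻¹)
  have e : (a / (a + b)) • a⁻¹ • A + (b / (a + b)) • b⁻¹ • B = (a + b)⁻¹ • (A + B) := by
    rw [smul_smul, smul_smul, smul_add]
    congr 2 <;> field_simp
  rw [e, one hA ha, one hB hb, ENNReal.one_rpow, ENNReal.one_rpow, one_mul] at h
  have h2 : 1 ≤ volumeRadius ((a + b)⁻¹ • (A + B)) := by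
    refine Real.one_le_rpow ?_ (by positivity)
    simpa using ENNReal.toReal_mono ((hA.add hB).smul _).measure_lt_top.ne h
  rw [volumeRadius_smul hn (inv_nonneg.2 hab.le)] at h2
  rwa [← div_eq_inv_mul, one_le_div hab] at h2

/-- A lower bound for the volume of a subset of `A + B` which misses only points `x` for which
`x - B` is contained in `A`. -/
lemma add_pow_sub_pow_le_volume (hn : n ≠ 0) (hA : IsCompact A) (hB : IsCompact B)
    (hA' : A.Nonempty) (hB' : B.Nonempty) {P : Set (EuclideanSpace ℝ (Fin n))} (hP : IsCompact P)
    (h : ∀ x ∈ A + B, x ∉ P → ∀ b ∈ B, x - b ∈ A) :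
    (volumeRadius A + volumeRadius B) ^ n - max 0 (volumeRadius A - volumeRadius B) ^ n ≤
      (volume P).toReal := by
  have hD : volume ((A + B) \ P) ≤
      ENNReal.ofReal (max 0 (volumeRadius A - volumeRadius B) ^ n) := by
    rw [((hA.add hB).measurableSet.diff hP.measurableSet).measure_eq_iSup_isCompact]
    refine iSup₂_le fun C hC => iSup_le fun hC' => ?_
    rcases C.eq_empty_or_nonempty with rfl | hne
    · simp
    rw [ENNReal.le_ofReal_iff_toReal_le hC'.measure_lt_top.ne (by positivity),
      ← volumeRadius_pow hn]
    refine pow_le_pow_left₀ volumeRadius_nonneg (le_max_of_le_right ?_) n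
    rw [le_sub_iff_add_le, ← volumeRadius_neg (A := B)]
    refine (volumeRadius_add_le hn hC' hB.neg hne hB'.neg).trans (volumeRadius_mono hA ?_)
    rintro _ ⟨x, hx, y, hy, rfl⟩
    simpa using h x (hC hx).1 (hC hx).2 (-y) hy
  have h1 : (volume (A + B)).toReal ≤
      (volume P).toReal + (volume ((A + B) \ P)).toReal := by
    rw [← ENNReal.toReal_add hP.measure_lt_top.ne
      (measure_lt_top_of_subset Set.sdiff_subset (hA.add hB).measure_lt_top.ne).ne]
    refine ENNReal.toReal_mono (ENNReal.add_ne_top.2 ⟨hP.measure_lt_top.ne,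
      (measure_lt_top_of_subset Set.sdiff_subset (hA.add hB).measure_lt_top.ne).ne⟩) ?_
    refine (measure_mono ?_).trans (measure_union_le _ _)
    intro x hx
    by_cases hxP : x ∈ P
    · exact Or.inl hxP
    · exact Or.inr ⟨hx, hxP⟩
  have h2 := ENNReal.toReal_le_of_le_ofReal (by positivity) hD
  have h3 := pow_le_pow_left₀ (add_nonneg volumeRadius_nonneg volumeRadius_nonneg)
    (volumeRadius_add_le hn hA hB hA' hB') n
  rw [volumeRadius_pow hn] at h3
  linarith

lemma add_le_volumeRadius (hn : n ≠ 0) (hA : IsCompact A) (hB : IsCompact B)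
    (hA' : A.Nonempty) (hB' : B.Nonempty) {P : Set (EuclideanSpace ℝ (Fin n))} (hP : IsCompact P)
    (h : ∀ x ∈ A + B, x ∉ P → ∀ b ∈ B, x - b ∈ A) (hAB : volumeRadius A ≤ volumeRadius B) :
    volumeRadius A + volumeRadius B ≤ volumeRadius P := by
  have h1 := add_pow_sub_pow_le_volume hn hA hB hA' hB' hP h
  rw [max_eq_left (by linarith), zero_pow hn, sub_zero, ← volumeRadius_pow hn] at h1
  exact le_of_pow_le_pow_left₀ hn volumeRadius_nonneg h1

lemma four_mul_le_volumeRadius_sq (hn : 2 ≤ n) (hA : IsCompact A) (hB : IsCompact B)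
    (hA' : A.Nonempty) (hB' : B.Nonempty) {P : Set (EuclideanSpace ℝ (Fin n))} (hP : IsCompact P)
    (h : ∀ x ∈ A + B, x ∉ P → ∀ b ∈ B, x - b ∈ A) :
    4 * volumeRadius A * volumeRadius B ≤ volumeRadius P ^ 2 := by
  have hn0 : n ≠ 0 := by omega
  have hA0 : 0 ≤ volumeRadius A := volumeRadius_nonneg
  have hB0 : 0 ≤ volumeRadius B := volumeRadius_nonneg
  rcases le_total (volumeRadius A) (volumeRadius B) with hAB | hAB
  · have := pow_le_pow_left₀ (add_nonneg hA0 hB0)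
      (add_le_volumeRadius hn0 hA hB hA' hB' hP h hAB) 2
    nlinarith [sq_nonneg (volumeRadius A - volumeRadius B)]
  have h1 := add_pow_sub_pow_le_volume hn0 hA hB hA' hB' hP h
  rw [max_eq_right (by linarith), ← volumeRadius_pow hn0] at h1
  have pow_eq : ∀ {x : ℝ}, 0 ≤ x → x ^ n = (x ^ 2) ^ ((n : ℝ) / 2) := by
    intro x hx
    rw [← Real.rpow_natCast x 2, ← Real.rpow_mul hx, ← Real.rpow_natCast]
    congr 1
    push_cast
    ring
  have hn2 : (1 : ℝ) ≤ n / 2 := by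
    rw [le_div_iff₀ two_pos]
    exact_mod_cast (by omega : 1 * 2 ≤ n)
  have h2 := Real.add_rpow_le_rpow_add (a := 4 * volumeRadius A * volumeRadius B) (by positivity)
    (sq_nonneg (volumeRadius A - volumeRadius B)) hn2
  rw [pow_eq (by positivity), pow_eq (sub_nonneg.2 hAB), pow_eq volumeRadius_nonneg] at h1
  have h3 : 4 * volumeRadius A * volumeRadius B + (volumeRadius A - volumeRadius B) ^ 2 =
    (volumeRadius A + volumeRadius B) ^ 2 := by ring
  rw [h3] at h2
  exact (Real.rpow_le_rpow_iff (by positivity) (by positivity) (by linarith)).1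
    (by linarith : (4 * volumeRadius A * volumeRadius B) ^ ((n : ℝ) / 2) ≤ _)

end volumeRadius

section Topology

variable {X : Type*} [TopologicalSpace X] {K L T : Set X}

lemma IsPreconnected.subset_interior_of_disjoint_frontier (hT : IsPreconnected T)
    (hK : IsClosed K) (hd : Disjoint T (frontier K)) (hne : (T ∩ K).Nonempty) :
    T ⊆ interior K := by
  have hmem : ∀ x ∈ T, x ∈ K → x ∈ interior K := fun x hxT hxK => by
    by_contra hx
    exact Set.disjoint_left.1 hd hxT (hK.frontier_eq ▸ ⟨hxK, hx⟩)
  obtain ⟨x, hxT, hxK⟩ := hne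
  refine hT.subset_left_of_subset_union isOpen_interior hK.isOpen_compl
    (disjoint_compl_right.mono_left interior_subset) (fun y hy => ?_) ⟨x, hxT, hmem x hxT hxK⟩
  by_cases hyK : y ∈ K
  · exact Or.inl (hmem y hy hyK)
  · exact Or.inr hyK

variable [PreconnectedSpace X] [NoncompactSpace X]

lemma IsCompact.eq_empty_of_isClopen (hK : IsCompact K) (h : IsClopen K) : K = ∅ :=
  (isClopen_iff.1 h).resolve_right fun h => noncompact_univ X (h ▸ hK)

variable [T2Space X]

lemma IsCompact.subset_interior_of_frontier_subset (hK : IsCompact K) (hL : IsCompact L)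
    (h₁ : frontier K ⊆ interior L) (h₂ : Disjoint K (frontier L)) : K ⊆ interior L := by
  rw [← Set.sdiff_eq_empty]
  refine (hK.diff isOpen_interior).eq_empty_of_isClopen ⟨(hK.diff isOpen_interior).isClosed, ?_⟩
  have : K \ interior L = interior K \ L := by
    ext x
    constructor
    · rintro ⟨hxK, hxL⟩
      refine ⟨?_, fun h => Set.disjoint_left.1 h₂ hxK (hL.isClosed.frontier_eq ▸ ⟨h, hxL⟩)⟩
      by_contra h
      exact hxL (h₁ (hK.isClosed.frontier_eq ▸ ⟨hxK, h⟩))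
    · exact fun h => ⟨interior_subset h.1, fun h' => h.2 (interior_subset h')⟩
  rw [this]
  exact isOpen_interior.sdiff hL.isClosed

/-- Two intersecting compact sets with disjoint connected boundaries are nested. -/
lemma IsCompact.subset_interior_or_subset_interior (hK : IsCompact K) (hL : IsCompact L)
    (hfK : IsPreconnected (frontier K)) (hfL : IsPreconnected (frontier L))
    (hd : Disjoint (frontier K) (frontier L)) (hne : (K ∩ L).Nonempty) :
    L ⊆ interior K ∨ K ⊆ interior L := by
  have int : ∀ {K : Set X}, IsCompact K → ∀ {x}, x ∈ K → x ∉ interior K → x ∈ frontier K :=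
    fun hK _ h h' => hK.isClosed.frontier_eq ▸ ⟨h, h'⟩
  have alt : ∀ {K L : Set X}, IsCompact L → IsPreconnected (frontier K) →
      Disjoint (frontier K) (frontier L) → frontier K ⊆ interior L ∨ Disjoint L (frontier K) := by
    intro K L hL hfK hd
    rcases (frontier K ∩ L).eq_empty_or_nonempty with h | h
    · exact Or.inr (Set.disjoint_iff_inter_eq_empty.2 h).symm
    · exact Or.inl (hfK.subset_interior_of_disjoint_frontier hL.isClosed hd h)
  rcases alt hL hfK hd with h₁ | h₁ <;> rcases alt hK hfL hd.symm with h₂ | h₂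
  · exfalso
    refine (hne.mono (Set.inter_subset_left.trans Set.subset_union_left)).ne_empty
      ((hK.union hL).eq_empty_of_isClopen ⟨(hK.union hL).isClosed, ?_⟩)
    have : K ∪ L = interior K ∪ interior L := by
      refine Set.Subset.antisymm ?_ (Set.union_subset_union interior_subset interior_subset)
      rintro x (hx | hx)
      · by_cases h : x ∈ interior K
        · exact Or.inl h
        · exact Or.inr (h₁ (int hK hx h))
      · by_cases h : x ∈ interior L
        · exact Or.inr h
        · exact Or.inl (h₂ (int hL hx h))
    rw [this]
    exact isOpen_interior.union isOpen_interior
  · exact Or.inr (hK.subset_interior_of_frontier_subset hL h₁ h₂)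
  · exact Or.inl (hL.subset_interior_of_frontier_subset hK h₂ h₁)
  · exfalso
    refine hne.ne_empty ((hK.inter hL).eq_empty_of_isClopen ⟨(hK.inter hL).isClosed, ?_⟩)
    have : K ∩ L = interior K ∩ interior L := by
      refine Set.Subset.antisymm ?_ (Set.inter_subset_inter interior_subset interior_subset)
      rintro x ⟨hxK, hxL⟩
      constructor
      · by_contra h
        exact Set.disjoint_left.1 h₁ hxL (int hK hxK h)
      · by_contra h
        exact Set.disjoint_left.1 h₂ hxK (int hL hxL h)
    rw [this]
    exact isOpen_interior.inter isOpen_interior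

end Topology

section FrontierSums

variable {n : ℕ} {K L S : Set (EuclideanSpace ℝ (Fin n))}

lemma sub_mem_of_notMem_frontier_add (hK : IsCompact K) (hS : IsPreconnected S) :
    ∀ x ∈ K + S, x ∉ frontier K + S → ∀ b ∈ S, x - b ∈ K := by
  rintro _ ⟨k, hk, s, hs, rfl⟩ hx b hb
  have h := (hS.image (fun b => k + s - b) (by fun_prop)).subset_interior_of_disjoint_frontier
    hK.isClosed (Set.disjoint_left.2 ?_) ⟨k, ⟨s, hs, by simp⟩, hk⟩
  · exact interior_subset (h ⟨b, hb, rfl⟩)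
  · rintro _ ⟨c, hc, rfl⟩ h
    exact hx ⟨_, h, c, hc, by simp⟩

lemma sub_mem_of_notMem_frontier_add_frontier (hn : n ≠ 0) (hK : IsCompact K) (hL : IsCompact L)
    (hne : K.Nonempty) (hfK : IsPreconnected (frontier K)) (hfL : IsPreconnected (frontier L))
    (hLK : volume L ≤ volume K) :
    ∀ x ∈ K + L, x ∉ frontier K + frontier L → ∀ b ∈ L, x - b ∈ K := by
  have : Nonempty (Fin n) := Fin.pos_iff_nonempty.1 (Nat.pos_of_ne_zero hn)
  rintro _ ⟨k, hk, l, hl, rfl⟩ hx b hb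
  set φ := Homeomorph.subLeft (k + l) with hφ
  have hφ' : ∀ y, φ y = k + l - y := fun _ => rfl
  have hfr : frontier (φ ⁻¹' L) = φ ⁻¹' frontier L := (φ.preimage_frontier L).symm
  have hL' : IsCompact (φ ⁻¹' L) := φ.isCompact_preimage.2 hL
  rcases hK.subset_interior_or_subset_interior hL' hfK
      (by rw [hfr]; exact φ.isPreconnected_preimage.2 hfL) (Set.disjoint_left.2 fun y hy hy' =>
        hx ⟨y, hy, k + l - y, by rw [hfr] at hy'; exact hy', by simp⟩)
      ⟨k, hk, by simpa [hφ'] using hl⟩ with h | h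
  · exact interior_subset (h (by simpa [hφ'] using hb))
  · exfalso
    have hopen : IsOpen (interior (φ ⁻¹' L) \ K) := isOpen_interior.sdiff hK.isClosed
    rcases (interior (φ ⁻¹' L) \ K).eq_empty_or_nonempty with h0 | h0
    · have hKeq : K = interior (φ ⁻¹' L) := h.antisymm (Set.sdiff_eq_empty.1 h0)
      exact hne.ne_empty (hK.eq_empty_of_isClopen ⟨hK.isClosed, hKeq ▸ isOpen_interior⟩)
    · have hvol : volume (φ ⁻¹' L) = volume L :=
        (volume.measurePreserving_sub_left (k + l)).measure_preimage
          hL.measurableSet.nullMeasurableSet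
      have hlt : volume K < volume L := by
        calc volume K < volume K + volume (interior (φ ⁻¹' L) \ K) :=
              ENNReal.lt_add_right hK.measure_lt_top.ne (hopen.measure_pos _ h0).ne'
          _ = volume (interior (φ ⁻¹' L)) := by
              rw [← measure_union Set.disjoint_sdiff_right hopen.measurableSet,
                Set.union_sdiff_cancel h]
          _ ≤ volume L := hvol ▸ measure_mono interior_subset
      exact hlt.not_ge hLK

lemma isConnected_add {X : Type*} [TopologicalSpace X] [Add X] [ContinuousAdd X] {S T : Set X}
    (hS : IsConnected S) (hT : IsConnected T) : IsConnected (S + T) := by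
  rw [← Set.add_image_prod]
  exact (hS.prod hT).image _ continuous_add.continuousOn

lemma IsCompact.frontier_of_t2 {X : Type*} [TopologicalSpace X] [T2Space X] {K : Set X}
    (hK : IsCompact K) : IsCompact (frontier K) :=
  hK.of_isClosed_subset isClosed_frontier hK.isClosed.frontier_subset

lemma four_mul_le_volumeRadius_frontier_add_frontier_sq (hn : 2 ≤ n) (hK : IsCompact K)
    (hL : IsCompact L) (hfK : IsConnected (frontier K)) (hfL : IsConnected (frontier L)) :
    4 * volumeRadius K * volumeRadius L ≤ volumeRadius (frontier K + frontier L) ^ 2 := by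
  have hKne := hfK.nonempty.mono hK.isClosed.frontier_subset
  have hLne := hfL.nonempty.mono hL.isClosed.frontier_subset
  rcases le_total (volume L) (volume K) with h | h
  · exact four_mul_le_volumeRadius_sq hn hK hL hKne hLne
      (hK.frontier_of_t2.add hL.frontier_of_t2)
      (sub_mem_of_notMem_frontier_add_frontier (by omega) hK hL hKne hfK.2 hfL.2 h)
  · rw [mul_right_comm, add_comm]
    exact four_mul_le_volumeRadius_sq hn hL hK hLne hKne
      (hL.frontier_of_t2.add hK.frontier_of_t2)
      (sub_mem_of_notMem_frontier_add_frontier (by omega) hL hK hLne hfL.2 hfK.2 h)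

end FrontierSums

lemma succ_pow_succ_le_two_pow_mul (m : ℕ) :
    ((m : ℝ) + 1) ^ (m + 1) ≤ 2 ^ (m + 1) * (m : ℝ) ^ m := by
  have hm : (0 : ℝ) < m + 1 := by positivity
  have h := one_add_mul_le_pow (a := ((m : ℝ) - 1) / (m + 1))
    (by rw [le_div_iff₀ hm]; linarith [(m.cast_nonneg : (0 : ℝ) ≤ m)]) m
  have e : 1 + ((m : ℝ) - 1) / (m + 1) = 2 * m / (m + 1) := by field_simp; ring
  rw [e, div_pow, le_div_iff₀ (by positivity), mul_pow] at h
  have e2 : (1 + m * (((m : ℝ) - 1) / (m + 1))) * (m + 1) = m ^ 2 + 1 := by field_simp; ring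
  calc ((m : ℝ) + 1) ^ (m + 1) = (m + 1) ^ m * (m + 1) := pow_succ _ _
    _ ≤ (m + 1) ^ m * (2 * (1 + m * (((m : ℝ) - 1) / (m + 1)))) := by
        refine mul_le_mul_of_nonneg_left ?_ (by positivity)
        refine le_of_mul_le_mul_right ?_ hm
        rw [mul_assoc 2, e2]
        nlinarith [sq_nonneg ((m : ℝ) - 1)]
    _ ≤ _ := by
        rw [pow_succ]
        linarith

/-- The recursive step for lower bounds by geometric means: `v` is the size of the sum of an
object of size `R` and one of size `s`, where `s` is bounded below by the geometric mean. -/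
lemma succ_mul_rpow_le_of_four_mul_le {m : ℕ} (hm : 1 ≤ m) {R s P v : ℝ} (hR : 0 ≤ R) (hP : 0 ≤ P)
    (hv : 0 ≤ v) (hs : m * P ^ ((1 : ℝ) / m) ≤ s) (h₁ : 4 * R * s ≤ v ^ 2)
    (h₂ : R ≤ s → R + s ≤ v) :
    ((m + 1 : ℕ) : ℝ) * (R * P) ^ ((1 : ℝ) / (m + 1 : ℕ)) ≤ v := by
  have hm0 : (0 : ℝ) < m := by exact_mod_cast hm
  set G := P ^ ((1 : ℝ) / m) with hG
  have hG0 : 0 ≤ G := Real.rpow_nonneg hP _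
  have hGP : G ^ m = P := by
    rw [hG, one_div, Real.rpow_inv_natCast_pow hP (by omega)]
  push_cast
  rcases le_total R s with h | h
  · refine le_trans ?_ (h₂ h)
    have := Real.geom_mean_le_arith_mean2_weighted (w₁ := 1 / ((m : ℝ) + 1))
      (w₂ := m / ((m : ℝ) + 1)) (by positivity) (by positivity) hR hG0 (by field_simp; ring)
    have e : G ^ ((m : ℝ) / (m + 1)) = P ^ (1 / ((m : ℝ) + 1)) := by
      rw [← hGP, ← Real.rpow_natCast, ← Real.rpow_mul hG0]
      congr 1
      field_simp
    rw [e, ← Real.mul_rpow hR hP] at this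
    calc ((m : ℝ) + 1) * (R * P) ^ (1 / ((m : ℝ) + 1))
        ≤ ((m : ℝ) + 1) * (1 / ((m : ℝ) + 1) * R + m / ((m : ℝ) + 1) * G) := by gcongr
      _ = R + m * G := by field_simp
      _ ≤ R + s := by gcongr
  · have hRG : m * G ≤ R := hs.trans h
    refine le_of_pow_le_pow_left₀ (n := 2 * (m + 1)) (by omega) hv ?_
    have e : ((R * P) ^ (1 / ((m : ℝ) + 1))) ^ (m + 1) = R * P := by
      have := Real.rpow_inv_natCast_pow (mul_nonneg hR hP) (Nat.succ_ne_zero m)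
      rw [one_div]
      exact_mod_cast this
    obtain ⟨k, rfl⟩ : ∃ k, m = k + 1 := ⟨m - 1, by omega⟩
    set M : ℝ := ((k + 1 : ℕ) : ℝ) with hM
    calc ((M + 1) * (R * P) ^ (1 / (M + 1))) ^ (2 * (k + 1 + 1))
        = ((M + 1) ^ (k + 1 + 1)) ^ 2 * (((R * P) ^ (1 / (M + 1))) ^ (k + 1 + 1)) ^ 2 := by
          rw [mul_pow, ← pow_mul, ← pow_mul, mul_comm 2]
      _ ≤ (2 ^ (k + 1 + 1) * M ^ (k + 1)) ^ 2 * (R * G ^ (k + 1)) ^ 2 := by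
          rw [e, hGP]
          gcongr
          exact succ_pow_succ_le_two_pow_mul (k + 1)
      _ = 4 ^ (k + 2) * R ^ 2 * (M * G) ^ (k + 2) * (M * G) ^ k := by
          rw [show (4 : ℝ) = 2 ^ 2 by norm_num, ← pow_mul]
          ring
      _ ≤ 4 ^ (k + 2) * R ^ 2 * (M * G) ^ (k + 2) * R ^ k := by gcongr
      _ = (4 * R * (M * G)) ^ (k + 2) := by ring
      _ ≤ (v ^ 2) ^ (k + 2) := by
          refine pow_le_pow_left₀ (by positivity) (le_trans ?_ h₁) _
          gcongr
      _ = v ^ (2 * (k + 1 + 1)) := by rw [← pow_mul]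

lemma card_mul_geom_mean_le_volumeRadius_sum_frontier {n : ℕ} (hn : 2 ≤ n) {m : ℕ} (hm : 2 ≤ m) :
    ∀ K : Fin m → Set (EuclideanSpace ℝ (Fin n)), (∀ i, IsCompact (K i)) →
    (∀ i, IsConnected (frontier (K i))) →
    IsCompact (∑ i, frontier (K i)) ∧ IsConnected (∑ i, frontier (K i)) ∧
      m * (∏ i, volumeRadius (K i)) ^ ((1 : ℝ) / m) ≤ volumeRadius (∑ i, frontier (K i)) := by
  induction m, hm using Nat.le_induction with
  | base =>
    intro K hK hb
    rw [Fin.sum_univ_two, Fin.prod_univ_two]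
    refine ⟨(hK 0).frontier_of_t2.add (hK 1).frontier_of_t2, isConnected_add (hb 0) (hb 1), ?_⟩
    refine le_of_pow_le_pow_left₀ two_ne_zero volumeRadius_nonneg ?_
    have := four_mul_le_volumeRadius_frontier_add_frontier_sq hn (hK 0) (hK 1) (hb 0) (hb 1)
    rw [mul_pow, one_div, Real.rpow_inv_natCast_pow (mul_nonneg volumeRadius_nonneg
      volumeRadius_nonneg) two_ne_zero]
    push_cast
    linarith
  | succ m hm ih =>
    intro K hK hb
    obtain ⟨hc, hconn, hle⟩ := ih (fun i => K i.succ) (fun i => hK _) (fun i => hb _)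
    rw [Fin.sum_univ_succ, Fin.prod_univ_succ]
    have hP := (hK 0).frontier_of_t2.add hc
    have hne := (hb 0).nonempty.mono (hK 0).isClosed.frontier_subset
    have hsub := sub_mem_of_notMem_frontier_add (hK 0) hconn.2
    exact ⟨hP, isConnected_add (hb 0) hconn, succ_mul_rpow_le_of_four_mul_le (by omega) volumeRadius_nonneg
      (Finset.prod_nonneg fun _ _ => volumeRadius_nonneg) volumeRadius_nonneg hle
      (four_mul_le_volumeRadius_sq hn (hK 0) hc hne hconn.nonempty hP hsub)
      (add_le_volumeRadius (by omega) (hK 0) hc hne hconn.nonempty hP hsub)⟩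

theorem multi_boundary_sum_average_lower_bound (n m : ℕ) (hn : 2 ≤ n) (hm : 2 < m)
    (K : Fin m → Set (EuclideanSpace ℝ (Fin n)))
    (hK : ∀ i, IsCompact (K i)) (hb : ∀ i, IsConnected (frontier (K i))) :
    (volume ((m:ℝ)⁻¹ • (∑ i, frontier (K i)))).toReal ≥
      (∏ i, (volume (K i)).toReal) ^ ((1:ℝ)/m) := by
  have hn0 : n ≠ 0 := by omega
  have hm0 : (0 : ℝ) < m := by exact_mod_cast (by omega : 0 < m)
  obtain ⟨-, -, h⟩ := card_mul_geom_mean_le_volumeRadius_sum_frontier hn hm.le K hK hb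
  have hprod : 0 ≤ ∏ i, volumeRadius (K i) := Finset.prod_nonneg fun _ _ => volumeRadius_nonneg
  simp only [← volumeRadius_pow hn0]
  rw [ge_iff_le, volumeRadius_smul hn0 (inv_nonneg.2 hm0.le), Finset.prod_pow,
    ← Real.rpow_natCast, ← Real.rpow_mul hprod, mul_comm, Real.rpow_mul hprod, Real.rpow_natCast]
  refine pow_le_pow_left₀ (Real.rpow_nonneg hprod _) ?_ n
  rwa [← div_eq_inv_mul, le_div_iff₀' hm0]
end
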